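/- arXiv:2110.01569 — 2 statements merged into one kernel-verified Lean document; each statement's English description precedes it below -/
import Mathlib

section
/- Let T be the bounded diagonal operator on ℓ²(ℕ, ℂ) defined by T e_n = (1/(n+1)) e_n for the standard orthonormal basis (e_n)_{n ∈ ℕ}. Then the principal two-sided ideal (T) of B(ℓ²) generated by T is not soft-edged: (T) ≠ (T)·K(ℓ²). -/
/-- The Hilbert space `ℓ²(ℕ, ℂ)` of square-summable complex sequences. -/
noncomputable abbrev ellTwo : Type := lp (fun _ : ℕ => ℂ) 2

/-- The standard orthonormal basis `(e_n)` of `ℓ²(ℕ, ℂ)`. -/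
noncomputable def stdBasis (n : ℕ) : ellTwo := lp.single 2 n 1

/-- The two-sided ideal of compact operators on `ℓ²`. -/
noncomputable def compactIdeal : TwoSidedIdeal (ellTwo →L[ℂ] ellTwo) :=
  TwoSidedIdeal.mk' {T : ellTwo →L[ℂ] ellTwo | IsCompactOperator (T : ellTwo → ellTwo)}
    isCompactOperator_zero
    (fun hx hy => hx.add hy)
    (fun hx => hx.neg)
    (fun {x y} hy => by simpa [Function.comp] using hy.clm_comp x)
    (fun {x y} hx => by simpa [Function.comp] using hx.comp_clm y)

/-- The product `I·J` of two two-sided ideals: the two-sided ideal whose elements are the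
finite sums of products `XY` with `X ∈ I` and `Y ∈ J`. -/
noncomputable def idealMul {R : Type*} [Ring R] (I J : TwoSidedIdeal R) : TwoSidedIdeal R :=
  TwoSidedIdeal.span {x : R | ∃ a ∈ I, ∃ b ∈ J, x = a * b}

/-!
The approximation numbers `a n X` (the distance from `X` to the operators of rank at most `n`)
satisfy `a (m + n) (X + Y) ≤ a m X + a n Y` and `a (m + n) (X * Y) ≤ a m X * a n Y`, and they tend
to zero when `X` is compact. Hence every element `X` of `(T)·K` satisfies
`a (r * n) X = o(a n T)` for some `r`. If `T` belonged to `(T)·K` and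
`a n T = O(a (2 * n) T)`, then `a n T = O(a (r * n) T) = o(a n T)`, which is absurd unless `T` has
finite rank. For the diagonal operator, `a n T = 1 / (n + 1)`.
-/

open Asymptotics Filter Submodule Topology

section Rank

variable {K V W W' : Type*} [DivisionRing K] [AddCommGroup V] [Module K V] [AddCommGroup W]
  [Module K W] [AddCommGroup W'] [Module K W'] {n : ℕ}

theorem rank_comp_le_of_rank_le {g : V →ₗ[K] W} (hg : g.rank ≤ n) (f : W →ₗ[K] W') :
    (f ∘ₗ g).rank ≤ n :=
  Cardinal.lift_le_nat_iff.1 <|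
    (LinearMap.lift_rank_comp_le_right g f).trans (Cardinal.lift_le_nat_iff.2 hg)

theorem rank_le_finrank_of_forall_mem {f : V →ₗ[K] W} {U : Submodule K W} [FiniteDimensional K U]
    (hf : ∀ x, f x ∈ U) : f.rank ≤ Module.finrank K U := by
  rw [Module.finrank_eq_rank]
  refine Submodule.rank_mono ?_
  rintro _ ⟨x, rfl⟩
  exact hf x

theorem exists_mem_ne_zero_of_rank_lt_finrank {f : V →ₗ[K] W} {U : Submodule K V}
    (hf : f.rank ≤ n) (hU : n < Module.finrank K U) : ∃ x ∈ U, x ≠ 0 ∧ f x = 0 := by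
  have : FiniteDimensional K U := FiniteDimensional.of_finrank_pos (n.zero_le.trans_lt hU)
  have : FiniteDimensional K f.range :=
    Module.rank_lt_aleph0_iff.1 (hf.trans_lt Cardinal.natCast_lt_aleph0)
  have ker_ne_bot : (f.rangeRestrict ∘ₗ U.subtype).ker ≠ ⊥ :=
    LinearMap.ker_ne_bot_of_finrank_lt ((Module.finrank_le_of_rank_le hf).trans_lt hU)
  obtain ⟨x, hfx, hx⟩ := exists_mem_ne_zero_of_ne_bot ker_ne_bot
  exact ⟨x, x.2, by simpa using hx, congrArg Subtype.val hfx⟩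

end Rank

section ApproxNumber

variable {𝕜 E F G : Type*} [NontriviallyNormedField 𝕜]
  [SeminormedAddCommGroup E] [NormedSpace 𝕜 E] [SeminormedAddCommGroup F] [NormedSpace 𝕜 F]
  [SeminormedAddCommGroup G] [NormedSpace 𝕜 G]

/-- The `n`-th approximation number of `T`: its distance in operator norm to the operators of rank
at most `n`. The index starts at `0`, so that `approxNumber T 0 = ‖T‖`. -/
noncomputable def approxNumber (T : E →L[𝕜] F) (n : ℕ) : ℝ :=
  Metric.infDist T {R : E →L[𝕜] F | (R : E →ₗ[𝕜] F).rank ≤ n}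

theorem zero_mem_setOf_rank_le (n : ℕ) :
    (0 : E →L[𝕜] F) ∈ {R : E →L[𝕜] F | (R : E →ₗ[𝕜] F).rank ≤ n} := by
  simp

theorem approxNumber_lt_iff {T : E →L[𝕜] F} {n : ℕ} {c : ℝ} :
    approxNumber T n < c ↔ ∃ R : E →L[𝕜] F, (R : E →ₗ[𝕜] F).rank ≤ n ∧ ‖T - R‖ < c := by
  simp only [approxNumber, Metric.infDist_lt_iff ⟨_, zero_mem_setOf_rank_le n⟩, dist_eq_norm,
    Set.mem_ofPred_eq]

theorem le_approxNumber_iff {T : E →L[𝕜] F} {n : ℕ} {c : ℝ} :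
    c ≤ approxNumber T n ↔ ∀ R : E →L[𝕜] F, (R : E →ₗ[𝕜] F).rank ≤ n → c ≤ ‖T - R‖ := by
  simp only [approxNumber, Metric.le_infDist ⟨_, zero_mem_setOf_rank_le n⟩, dist_eq_norm,
    Set.mem_ofPred_eq]

theorem approxNumber_le_norm_sub (T : E →L[𝕜] F) {R : E →L[𝕜] F} {n : ℕ}
    (hR : (R : E →ₗ[𝕜] F).rank ≤ n) : approxNumber T n ≤ ‖T - R‖ :=
  le_approxNumber_iff.1 le_rfl R hR

theorem approxNumber_nonneg (T : E →L[𝕜] F) (n : ℕ) : 0 ≤ approxNumber T n :=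
  Metric.infDist_nonneg

theorem approxNumber_le_norm (T : E →L[𝕜] F) (n : ℕ) : approxNumber T n ≤ ‖T‖ := by
  simpa using approxNumber_le_norm_sub T (zero_mem_setOf_rank_le n)

theorem approxNumber_zero (n : ℕ) : approxNumber (0 : E →L[𝕜] F) n = 0 :=
  le_antisymm (by simpa using approxNumber_le_norm (0 : E →L[𝕜] F) n) (approxNumber_nonneg 0 n)

theorem approxNumber_antitone (T : E →L[𝕜] F) : Antitone (approxNumber T) := fun _ _ hmn =>
  le_approxNumber_iff.2 fun _ hR => approxNumber_le_norm_sub T (hR.trans (by exact_mod_cast hmn))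

theorem approxNumber_add_le (S T : E →L[𝕜] F) (m n : ℕ) :
    approxNumber (S + T) (m + n) ≤ approxNumber S m + approxNumber T n := by
  refine le_of_forall_pos_lt_add fun ε hε => ?_
  obtain ⟨P, hP, hSP⟩ :=
    approxNumber_lt_iff.1 (lt_add_of_pos_right (approxNumber S m) (half_pos hε))
  obtain ⟨Q, hQ, hTQ⟩ :=
    approxNumber_lt_iff.1 (lt_add_of_pos_right (approxNumber T n) (half_pos hε))
  have rank_le : ((P + Q : E →L[𝕜] F) : E →ₗ[𝕜] F).rank ≤ (m + n : ℕ) := by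
    push_cast
    exact (LinearMap.rank_add_le _ _).trans (add_le_add hP hQ)
  calc approxNumber (S + T) (m + n) ≤ ‖S + T - (P + Q)‖ := approxNumber_le_norm_sub _ rank_le
    _ ≤ ‖S - P‖ + ‖T - Q‖ := by rw [add_sub_add_comm]; exact norm_add_le _ _
    _ < approxNumber S m + approxNumber T n + ε := by linarith

theorem approxNumber_comp_le (S : F →L[𝕜] G) (T : E →L[𝕜] F) (m n : ℕ) :
    approxNumber (S ∘L T) (m + n) ≤ approxNumber S m * approxNumber T n := by
  refine le_mul_of_forall_lt₀ fun s hs t ht => ?_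
  obtain ⟨P, hP, hSP⟩ := approxNumber_lt_iff.1 hs
  obtain ⟨Q, hQ, hTQ⟩ := approxNumber_lt_iff.1 ht
  have rank_left : ((P ∘L T : E →L[𝕜] G) : E →ₗ[𝕜] G).rank ≤ m :=
    (LinearMap.rank_comp_le_left (T : E →ₗ[𝕜] F) (P : F →ₗ[𝕜] G)).trans hP
  have rank_right : (((S - P) ∘L Q : E →L[𝕜] G) : E →ₗ[𝕜] G).rank ≤ n :=
    rank_comp_le_of_rank_le hQ ((S - P : F →L[𝕜] G) : F →ₗ[𝕜] G)
  have rank_le : ((P ∘L T + (S - P) ∘L Q : E →L[𝕜] G) : E →ₗ[𝕜] G).rank ≤ (m + n : ℕ) := by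
    push_cast
    exact (LinearMap.rank_add_le _ _).trans (add_le_add rank_left rank_right)
  calc approxNumber (S ∘L T) (m + n)
      ≤ ‖S ∘L T - (P ∘L T + (S - P) ∘L Q)‖ := approxNumber_le_norm_sub _ rank_le
    _ = ‖(S - P) ∘L (T - Q)‖ := by
      congr 1
      simp only [ContinuousLinearMap.sub_comp, ContinuousLinearMap.comp_sub]
      abel
    _ ≤ ‖S - P‖ * ‖T - Q‖ := ContinuousLinearMap.opNorm_comp_le _ _
    _ ≤ s * t :=
      mul_le_mul hSP.le hTQ.le (norm_nonneg _) ((approxNumber_nonneg S m).trans hs.le)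

theorem approxNumber_comp_le_norm_mul (S : F →L[𝕜] G) (T : E →L[𝕜] F) (n : ℕ) :
    approxNumber (S ∘L T) n ≤ ‖S‖ * approxNumber T n := by
  simpa using (approxNumber_comp_le S T 0 n).trans
    (mul_le_mul_of_nonneg_right (approxNumber_le_norm S 0) (approxNumber_nonneg T n))

theorem approxNumber_comp_le_mul_norm (S : F →L[𝕜] G) (T : E →L[𝕜] F) (n : ℕ) :
    approxNumber (S ∘L T) n ≤ approxNumber S n * ‖T‖ :=
  (approxNumber_comp_le S T n 0).trans
    (mul_le_mul_of_nonneg_left (approxNumber_le_norm T 0) (approxNumber_nonneg S n))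

theorem isBigO_approxNumber_comp_left {α : Type*} (S : F →L[𝕜] G) (T : E →L[𝕜] F) (l : Filter α)
    (k : α → ℕ) :
    (fun a => approxNumber (S ∘L T) (k a)) =O[l] fun a => approxNumber T (k a) :=
  .of_bound ‖S‖ <| .of_forall fun a => by
    simpa only [Real.norm_of_nonneg (approxNumber_nonneg _ _)] using
      approxNumber_comp_le_norm_mul S T (k a)

theorem isBigO_approxNumber_comp_right {α : Type*} (S : F →L[𝕜] G) (T : E →L[𝕜] F) (l : Filter α)
    (k : α → ℕ) :
    (fun a => approxNumber (S ∘L T) (k a)) =O[l] fun a => approxNumber S (k a) :=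
  .of_bound ‖T‖ <| .of_forall fun a => by
    simpa only [Real.norm_of_nonneg (approxNumber_nonneg _ _), mul_comm ‖T‖] using
      approxNumber_comp_le_mul_norm S T (k a)

theorem approxNumber_comp_two_mul_isLittleO (S : F →L[𝕜] G) {T : E →L[𝕜] F}
    (hT : Tendsto (approxNumber T) atTop (𝓝 0)) :
    (fun n => approxNumber (S ∘L T) (2 * n)) =o[atTop] approxNumber S := by
  have mul_isLittleO : (fun n => approxNumber S n * approxNumber T n) =o[atTop] approxNumber S := by
    simpa using (isBigO_refl (approxNumber S) atTop).mul_isLittleO ((isLittleO_one_iff ℝ).2 hT)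
  refine IsBigO.trans_isLittleO (isBigO_of_le _ fun n => ?_) mul_isLittleO
  rw [Real.norm_of_nonneg (approxNumber_nonneg _ _), two_mul]
  exact (approxNumber_comp_le S T n n).trans (Real.le_norm_self _)

end ApproxNumber

theorem le_approxNumber_of_forall_mem {𝕜 E F : Type*} [NontriviallyNormedField 𝕜]
    [NormedAddCommGroup E] [NormedSpace 𝕜 E] [SeminormedAddCommGroup F] [NormedSpace 𝕜 F]
    {T : E →L[𝕜] F} {U : Submodule 𝕜 E} {n : ℕ} {c : ℝ} (hU : n < Module.finrank 𝕜 U)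
    (hT : ∀ x ∈ U, c * ‖x‖ ≤ ‖T x‖) : c ≤ approxNumber T n := by
  refine le_approxNumber_iff.2 fun R hR => ?_
  obtain ⟨x, hxU, hx, hRx⟩ := exists_mem_ne_zero_of_rank_lt_finrank hR hU
  refine le_of_mul_le_mul_right ?_ (norm_pos_iff.2 hx)
  calc c * ‖x‖ ≤ ‖T x‖ := hT x hxU
    _ = ‖(T - R) x‖ := by simpa using congrArg (‖T x - ·‖) hRx.symm
    _ ≤ ‖T - R‖ * ‖x‖ := (T - R).le_opNorm x

section InnerProductSpace

variable {𝕜 E F : Type*} [RCLike 𝕜] [NormedAddCommGroup F] [InnerProductSpace 𝕜 F]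

theorem approxNumber_le_of_forall_mem_orthogonal [SeminormedAddCommGroup E] [NormedSpace 𝕜 E]
    {T : F →L[𝕜] E} {U : Submodule 𝕜 F} [FiniteDimensional 𝕜 U] {n : ℕ} {c : ℝ}
    (hU : Module.finrank 𝕜 U ≤ n) (hc : 0 ≤ c) (hT : ∀ x ∈ Uᗮ, ‖T x‖ ≤ c * ‖x‖) :
    approxNumber T n ≤ c := by
  have rank_le : ((T ∘L U.starProjection : F →L[𝕜] E) : F →ₗ[𝕜] E).rank ≤ n :=
    rank_comp_le_of_rank_le ((rank_le_finrank_of_forall_mem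
      (f := (U.starProjection : F →ₗ[𝕜] F)) U.starProjection_apply_mem).trans
        (by exact_mod_cast hU)) (T : F →ₗ[𝕜] E)
  refine (approxNumber_le_norm_sub T rank_le).trans
    (ContinuousLinearMap.opNorm_le_bound _ hc fun x => ?_)
  calc ‖(T - T ∘L U.starProjection) x‖ = ‖T (x - U.starProjection x)‖ := by simp
    _ ≤ c * ‖x - U.starProjection x‖ := hT _ (sub_starProjection_mem_orthogonal x)
    _ = c * ‖Uᗮ.starProjection x‖ := by rw [starProjection_orthogonal_val]
    _ ≤ c * ‖x‖ := by gcongr; exact norm_starProjection_apply_le _ x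

theorem exists_norm_sub_starProjection_lt {s : Set F} (hs : TotallyBounded s) {ε : ℝ}
    (hε : 0 < ε) : ∃ (U : Submodule 𝕜 F) (_ : FiniteDimensional 𝕜 U),
      ∀ y ∈ s, ‖y - U.starProjection y‖ < ε := by
  obtain ⟨t, ht, hst⟩ := Metric.totallyBounded_iff.1 hs ε hε
  have := FiniteDimensional.span_of_finite 𝕜 ht
  refine ⟨span 𝕜 t, this, fun y hy => ?_⟩
  obtain ⟨z, hz, hyz⟩ := Set.mem_iUnion₂.1 (hst hy)
  calc ‖y - (span 𝕜 t).starProjection y‖ = ⨅ u : span 𝕜 t, ‖y - u‖ := starProjection_minimal y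
    _ ≤ ‖y - z‖ :=
      ciInf_le ⟨0, Set.forall_mem_range.2 fun _ => norm_nonneg _⟩ (⟨z, subset_span hz⟩ : span 𝕜 t)
    _ < ε := by rwa [← dist_eq_norm]

theorem tendsto_approxNumber_of_isCompactOperator [SeminormedAddCommGroup E] [NormedSpace 𝕜 E]
    {K : E →L[𝕜] F} (hK : IsCompactOperator K) : Tendsto (approxNumber K) atTop (𝓝 0) := by
  obtain ⟨C, hC, hKC⟩ :=
    IsCompactOperator.image_closedBall_subset_compact (f := (K : E →ₗ[𝕜] F)) hK 1
  refine Metric.tendsto_atTop.2 fun ε hε => ?_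
  obtain ⟨U, _, hU⟩ :=
    exists_norm_sub_starProjection_lt (𝕜 := 𝕜) hC.totallyBounded (half_pos hε)
  have rank_le :
      ((U.starProjection ∘L K : E →L[𝕜] F) : E →ₗ[𝕜] F).rank ≤ Module.finrank 𝕜 U :=
    rank_le_finrank_of_forall_mem fun x => U.starProjection_apply_mem (K x)
  refine ⟨Module.finrank 𝕜 U, fun n hn => ?_⟩
  rw [Real.dist_0_eq_abs, abs_of_nonneg (approxNumber_nonneg K n)]
  calc approxNumber K n ≤ approxNumber K (Module.finrank 𝕜 U) := approxNumber_antitone K hn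
    _ ≤ ‖K - U.starProjection ∘L K‖ := approxNumber_le_norm_sub K rank_le
    _ ≤ ε / 2 := ContinuousLinearMap.opNorm_le_of_unit_norm (half_pos hε).le fun x hx =>
      (hU (K x) (hKC ⟨x, by simp [hx], rfl⟩)).le
    _ < ε := half_lt_self hε

end InnerProductSpace

section Diagonal

variable {ι 𝕜 E : Type*} [RCLike 𝕜] [NormedAddCommGroup E] [InnerProductSpace 𝕜 E]

theorem repr_apply_of_diagonal (b : HilbertBasis ι 𝕜 E) {T : E →L[𝕜] E} {d : ι → 𝕜}
    (hT : ∀ i, T (b i) = d i • b i) (x : E) (i : ι) : b.repr (T x) i = d i * b.repr x i := by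
  classical
  have coord_comp : innerSL 𝕜 (b i) ∘L T = d i • innerSL 𝕜 (b i) := by
    refine ContinuousLinearMap.ext_on
      (dense_iff_topologicalClosure_eq_top.2 b.dense_span) ?_
    rintro _ ⟨j, rfl⟩
    obtain rfl | hij := eq_or_ne i j
    · simp [hT]
    · simp [hT, b.orthonormal.inner_eq_zero hij]
  simpa [b.repr_apply_apply] using DFunLike.congr_fun coord_comp x

theorem norm_apply_le_of_diagonal (b : HilbertBasis ι 𝕜 E) {T : E →L[𝕜] E} {d : ι → 𝕜}
    (hT : ∀ i, T (b i) = d i • b i) {x : E} {c : ℝ} (hc : 0 ≤ c)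
    (hd : ∀ i, b.repr x i ≠ 0 → ‖d i‖ ≤ c) : ‖T x‖ ≤ c * ‖x‖ := by
  have norm_repr_le : ‖b.repr (T x)‖ ≤ ‖(c : 𝕜) • b.repr x‖ := by
    refine lp.norm_mono two_ne_zero fun i => ?_
    obtain hi | hi := eq_or_ne (b.repr x i) 0
    · simp [repr_apply_of_diagonal b hT, hi]
    · simpa [repr_apply_of_diagonal b hT, norm_smul, abs_of_nonneg hc] using
        mul_le_mul_of_nonneg_right (hd i hi) (norm_nonneg (b.repr x i))
  simpa [norm_smul, abs_of_nonneg hc] using norm_repr_le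

theorem le_norm_apply_of_diagonal (b : HilbertBasis ι 𝕜 E) {T : E →L[𝕜] E} {d : ι → 𝕜}
    (hT : ∀ i, T (b i) = d i • b i) {x : E} {c : ℝ} (hc : 0 ≤ c)
    (hd : ∀ i, b.repr x i ≠ 0 → c ≤ ‖d i‖) : c * ‖x‖ ≤ ‖T x‖ := by
  have le_norm_repr : ‖(c : 𝕜) • b.repr x‖ ≤ ‖b.repr (T x)‖ := by
    refine lp.norm_mono two_ne_zero fun i => ?_
    obtain hi | hi := eq_or_ne (b.repr x i) 0
    · simp [hi]
    · simpa [repr_apply_of_diagonal b hT, norm_smul, abs_of_nonneg hc] using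
        mul_le_mul_of_nonneg_right (hd i hi) (norm_nonneg (b.repr x i))
  simpa [norm_smul, abs_of_nonneg hc] using le_norm_repr

theorem approxNumber_of_diagonal (b : HilbertBasis ℕ 𝕜 E) {T : E →L[𝕜] E} {d : ℕ → 𝕜}
    (hT : ∀ i, T (b i) = d i • b i) (hd : Antitone fun i => ‖d i‖) (n : ℕ) :
    approxNumber T n = ‖d n‖ := by
  apply le_antisymm
  · have finrank_le : Module.finrank 𝕜 (span 𝕜 (Set.range fun i : Fin n => b i)) ≤ n :=
      (finrank_range_le_card _).trans_eq (Fintype.card_fin n)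
    have : FiniteDimensional 𝕜 (span 𝕜 (Set.range fun i : Fin n => b i)) :=
      FiniteDimensional.span_of_finite 𝕜 (Set.finite_range _)
    refine approxNumber_le_of_forall_mem_orthogonal finrank_le (norm_nonneg _) fun x hx =>
      norm_apply_le_of_diagonal b hT (norm_nonneg _) fun i hi => hd ?_
    contrapose! hi
    rw [b.repr_apply_apply]
    exact hx (b i) (subset_span ⟨⟨i, hi⟩, rfl⟩)
  · have finrank_eq :
        Module.finrank 𝕜 (span 𝕜 (Set.range fun i : Fin (n + 1) => b i)) = n + 1 :=
      (finrank_span_eq_card (b.orthonormal.linearIndependent.comp _ Fin.val_injective)).trans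
        (Fintype.card_fin (n + 1))
    refine le_approxNumber_of_forall_mem (n.lt_succ_self.trans_eq finrank_eq.symm) fun x hx =>
      le_norm_apply_of_diagonal b hT (norm_nonneg _) fun i hi => hd ?_
    contrapose! hi
    have span_le_orthogonal : span 𝕜 (Set.range fun j : Fin (n + 1) => b j) ≤ (𝕜 ∙ b i)ᗮ := by
      rw [span_le, Set.range_subset_iff]
      exact fun j => mem_orthogonal_singleton_iff_inner_right.2
        (b.orthonormal.inner_eq_zero (by lia))
    rw [b.repr_apply_apply]
    exact mem_orthogonal_singleton_iff_inner_right.1 (span_le_orthogonal hx)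

end Diagonal

theorem isBigO_comp_mul_of_isBigO_comp_two_mul {f : ℕ → ℝ} (hf : Antitone f)
    (hf₀ : 0 ≤ f) (h : f =O[atTop] fun n => f (2 * n)) (r : ℕ) :
    f =O[atTop] fun n => f (r * n) := by
  have isBigO_two_pow (p : ℕ) : f =O[atTop] fun n => f (2 ^ p * n) := by
    induction p with
    | zero => simpa using isBigO_refl f atTop
    | succ p ih =>
      have doubled := h.comp_tendsto (tendsto_id.const_mul_atTop' (Nat.two_pow_pos p))
      refine ih.trans (doubled.congr_right fun n => ?_)
      simp [pow_succ', mul_assoc]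
  refine (isBigO_two_pow r).trans (isBigO_of_le _ fun n => ?_)
  rw [Real.norm_of_nonneg (hf₀ _), Real.norm_of_nonneg (hf₀ _)]
  exact hf (Nat.mul_le_mul_right n r.lt_two_pow_self.le)

theorem idealMul_span_le {R : Type*} [Ring R] (s : Set R) (J : TwoSidedIdeal R) :
    idealMul (TwoSidedIdeal.span s) J ≤
      TwoSidedIdeal.span {x | ∃ a ∈ s, ∃ b ∈ J, x = a * b} := by
  refine TwoSidedIdeal.span_le.2 ?_
  rintro _ ⟨a, ha, b, hb, rfl⟩
  induction ha using TwoSidedIdeal.span_induction generalizing b with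
  | mem a ha => exact TwoSidedIdeal.subset_span ⟨a, ha, b, hb, rfl⟩
  | zero =>
    rw [zero_mul]
    exact TwoSidedIdeal.zero_mem _
  | add a a' _ _ iha iha' =>
    rw [add_mul]
    exact TwoSidedIdeal.add_mem _ (iha b hb) (iha' b hb)
  | neg a _ iha =>
    rw [neg_mul]
    exact TwoSidedIdeal.neg_mem _ (iha b hb)
  | left_absorb c a _ iha =>
    rw [mul_assoc]
    exact TwoSidedIdeal.mul_mem_left _ c _ (iha b hb)
  | right_absorb c a _ iha =>
    rw [mul_assoc]
    exact iha (c * b) (TwoSidedIdeal.mul_mem_left _ c b hb)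

section Ideals

variable {𝕜 E : Type*} [NontriviallyNormedField 𝕜] [SeminormedAddCommGroup E] [NormedSpace 𝕜 E]
  {J : TwoSidedIdeal (E →L[𝕜] E)} {T X : E →L[𝕜] E}

theorem exists_approxNumber_isLittleO_of_mem_idealMul
    (hJ : ∀ K ∈ J, Tendsto (approxNumber K) atTop (𝓝 0))
    (hX : X ∈ idealMul (TwoSidedIdeal.span {T}) J) :
    ∃ r : ℕ, (fun n => approxNumber X (r * n)) =o[atTop] approxNumber T := by
  replace hX := idealMul_span_le _ _ hX
  induction hX using TwoSidedIdeal.span_induction with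
  | mem X hX =>
    obtain ⟨T, rfl, K, hK, rfl⟩ := hX
    exact ⟨2, approxNumber_comp_two_mul_isLittleO T (hJ K hK)⟩
  | zero => exact ⟨0, by simpa only [approxNumber_zero] using isLittleO_zero _ _⟩
  | add X Y _ _ ihX ihY =>
    obtain ⟨r, hr⟩ := ihX
    obtain ⟨s, hs⟩ := ihY
    refine ⟨r + s, IsBigO.trans_isLittleO (isBigO_of_le _ fun n => ?_) (hr.add hs)⟩
    rw [Real.norm_of_nonneg (approxNumber_nonneg _ _), add_mul]
    exact (approxNumber_add_le X Y _ _).trans (Real.le_norm_self _)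
  | neg X _ ih =>
    obtain ⟨r, hr⟩ := ih
    exact ⟨r, by simpa using (isBigO_approxNumber_comp_left (-.id 𝕜 E) X _ _).trans_isLittleO hr⟩
  | left_absorb A X _ ih =>
    obtain ⟨r, hr⟩ := ih
    exact ⟨r, (isBigO_approxNumber_comp_left A X _ _).trans_isLittleO hr⟩
  | right_absorb A X _ ih =>
    obtain ⟨r, hr⟩ := ih
    exact ⟨r, (isBigO_approxNumber_comp_right X A _ _).trans_isLittleO hr⟩

theorem stmt5_general (hJ : ∀ K ∈ J, Tendsto (approxNumber K) atTop (𝓝 0))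
    (hT₀ : ∃ᶠ n in atTop, approxNumber T n ≠ 0)
    (hT : approxNumber T =O[atTop] fun n => approxNumber T (2 * n)) :
    TwoSidedIdeal.span {T} ≠ idealMul (TwoSidedIdeal.span {T}) J := by
  intro h
  have hmem : T ∈ idealMul (TwoSidedIdeal.span {T}) J := h ▸ TwoSidedIdeal.subset_span rfl
  obtain ⟨r, hr⟩ := exists_approxNumber_isLittleO_of_mem_idealMul hJ hmem
  exact isLittleO_irrefl hT₀ ((isBigO_comp_mul_of_isBigO_comp_two_mul
    (approxNumber_antitone T) (approxNumber_nonneg T) hT r).trans_isLittleO hr)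

end Ideals

theorem mem_compactIdeal {K : ellTwo →L[ℂ] ellTwo} :
    K ∈ compactIdeal ↔ IsCompactOperator (K : ellTwo → ellTwo) :=
  TwoSidedIdeal.mem_mk' _ _ _ _ _ _ K

section HarmonicDiagonal

/-- `stdBasis` as a `HilbertBasis`, for use with the results on diagonal operators; its coordinate
map is the identity of `ellTwo`. -/
noncomputable def stdHilbertBasis : HilbertBasis ℕ ℂ ellTwo :=
  .ofRepr (LinearIsometryEquiv.refl ℂ ellTwo)

theorem stdHilbertBasis_apply (n : ℕ) : stdHilbertBasis n = stdBasis n :=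
  (stdHilbertBasis.repr_symm_single n).symm

theorem approxNumber_of_harmonic_diagonal {T : ellTwo →L[ℂ] ellTwo}
    (hT : ∀ n : ℕ, T (stdBasis n) = ((n : ℂ) + 1)⁻¹ • stdBasis n) (n : ℕ) :
    approxNumber T n = ((n : ℝ) + 1)⁻¹ := by
  have norm_weight (i : ℕ) : ‖((i : ℂ) + 1)⁻¹‖ = ((i : ℝ) + 1)⁻¹ := by
    rw [norm_inv, ← Nat.cast_add_one, Complex.norm_natCast, Nat.cast_add_one]
  rw [← norm_weight]
  refine approxNumber_of_diagonal stdHilbertBasis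
    (fun i => by rw [stdHilbertBasis_apply, hT]) (fun i j hij => ?_) n
  simp only [norm_weight]
  gcongr

theorem isBigO_inv_add_one_comp_two_mul :
    (fun n : ℕ => ((n : ℝ) + 1)⁻¹) =O[atTop] fun n : ℕ => (((2 * n : ℕ) : ℝ) + 1)⁻¹ := by
  refine .of_bound 2 (.of_forall fun n => ?_)
  rw [Real.norm_of_nonneg (by positivity), Real.norm_of_nonneg (by positivity),
    ← div_eq_mul_inv, inv_eq_one_div, div_le_div_iff₀ (by positivity) (by positivity)]
  push_cast
  linarith

end HarmonicDiagonal

/-- The principal two-sided ideal generated by the diagonal operator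
`T e_n = (1/(n+1)) e_n` on `ℓ²(ℕ, ℂ)` is not soft-edged: `(T) ≠ (T)·K(ℓ²)`. -/
theorem stmt5 (T : ellTwo →L[ℂ] ellTwo)
    (hT : ∀ n : ℕ, T (stdBasis n) = ((n : ℂ) + 1)⁻¹ • stdBasis n) :
    TwoSidedIdeal.span {T} ≠ idealMul (TwoSidedIdeal.span {T}) compactIdeal := by
  have harmonic : approxNumber T = fun n : ℕ => ((n : ℝ) + 1)⁻¹ :=
    funext (approxNumber_of_harmonic_diagonal hT)
  exact stmt5_general
    (fun _ hK => tendsto_approxNumber_of_isCompactOperator (mem_compactIdeal.1 hK))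
    (harmonic ▸ .of_forall fun n => by positivity) (harmonic ▸ isBigO_inv_add_one_comp_two_mul)
end

section
/- Let T be the bounded diagonal operator on ℓ²(ℕ, ℂ) defined by T e_n = 2^{-n} e_n for the standard orthonormal basis (e_n)_{n ∈ ℕ}. Then the principal two-sided ideal (T) of B(ℓ²) generated by T is soft-edged: (T) = (T)·K(ℓ²). -/
/-
If `c n = c (n / m) * a n` with `a → 0`, then the diagonal operator `T = diag c` factors as
`diag (c (n / m)) * diag a`. The second factor is compact, as a norm limit of finite-rank operators.
The first one lies in `(T)`: it is the direct sum of `m` copies of `T`, carried by the arithmetic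
progressions modulo `m`, that is `∑ r < m, V r * T * (V r)†` for the isometries
`V r : e k ↦ e (m * k + r)`. Hence `T ∈ (T)·K`. For `c n = 2⁻ⁿ` take `m = 2`.
-/

open Filter Topology InnerProductSpace
open ContinuousLinearMap (adjoint)
open scoped ENNReal

section Ideal

variable {R : Type*} [Ring R] {I J : TwoSidedIdeal R}

lemma mul_mem_idealMul {x y : R} (hx : x ∈ I) (hy : y ∈ J) : x * y ∈ idealMul I J :=
  TwoSidedIdeal.subset_span ⟨x, hx, y, hy, rfl⟩

lemma idealMul_le_left : idealMul I J ≤ I := by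
  refine TwoSidedIdeal.span_le.2 ?_
  rintro _ ⟨x, hx, y, -, rfl⟩
  exact I.mul_mem_right x y hx

lemma span_singleton_eq_idealMul {x y : R} (hx : x ∈ TwoSidedIdeal.span {x * y}) (hy : y ∈ J) :
    TwoSidedIdeal.span {x * y} = idealMul (TwoSidedIdeal.span {x * y}) J :=
  le_antisymm (TwoSidedIdeal.span_le.2 (Set.singleton_subset_iff.2 (mul_mem_idealMul hx hy)))
    idealMul_le_left

end Ideal

section NullFamily

variable {ι : Type*} {E : ι → Type*} [∀ i, NormedAddCommGroup (E i)]

lemma hasSum_lp_infty_single_of_tendsto_norm [DecidableEq ι] {a : lp E ∞}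
    (ha : Tendsto (fun i ↦ ‖a i‖) cofinite (𝓝 0)) : HasSum (fun i ↦ lp.single ∞ i (a i)) a := by
  refine Metric.tendsto_atTop.2 fun ε hε ↦ ?_
  have hlarge : {i | ¬‖a i‖ < ε / 2}.Finite := ha.eventually (gt_mem_nhds (half_pos hε))
  refine ⟨hlarge.toFinset, fun s hs ↦ ?_⟩
  rw [dist_comm, dist_eq_norm]
  refine (lp.norm_le_of_forall_le (half_pos hε).le fun i ↦ ?_).trans_lt (half_lt_self hε)
  have hcoord : (a - ∑ j ∈ s, lp.single ∞ j (a j)) i = if i ∈ s then 0 else a i := by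
    rw [lp.coeFn_sub, Pi.sub_apply, lp.coeFn_sum, Finset.sum_apply]
    split_ifs with hi <;> simp [hi]
  rw [hcoord]
  split_ifs with hi
  · simpa using (half_pos hε).le
  · have hsmall : ‖a i‖ < ε / 2 := by
      by_contra h
      exact hi (hs (hlarge.mem_toFinset.2 h))
    exact hsmall.le

end NullFamily

section HilbertBasis

variable {ι 𝕜 E F : Type*} [RCLike 𝕜] [NormedAddCommGroup E] [InnerProductSpace 𝕜 E]
  [NormedAddCommGroup F] [InnerProductSpace 𝕜 F]

lemma clm_ext_of_hilbertBasis (b : HilbertBasis ι 𝕜 E) {A B : E →L[𝕜] F}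
    (h : ∀ i, A (b i) = B (b i)) : A = B :=
  ContinuousLinearMap.ext_on (Submodule.dense_iff_topologicalClosure_eq_top.2 b.dense_span)
    (Set.forall_mem_range.2 h)

lemma isCompactOperator_rankOne (x : E) (y : F) : IsCompactOperator (rankOne 𝕜 x y) :=
  (isCompactOperator_of_locallyCompactSpace_dom (innerSL 𝕜 y)).clm_comp
    (ContinuousLinearMap.toSpanSingleton 𝕜 x)

/-- The operator with matrix `diag a` in the Hilbert basis `b`, as a continuous linear function of
the bounded family `a`, encoded as an element of `ℓ^∞`. -/
noncomputable def diagonalOperator (b : HilbertBasis ι 𝕜 E) :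
    lp (fun _ : ι ↦ 𝕜) ∞ →L[𝕜] E →L[𝕜] E :=
  (b.repr.symm.toContinuousLinearEquiv.arrowCongr
      b.repr.symm.toContinuousLinearEquiv).toContinuousLinearMap ∘L
    lp.holderL 2 (fun _ ↦ ContinuousLinearMap.mul 𝕜 𝕜) (K := 1) (by simp)

lemma diagonalOperator_apply_basis (b : HilbertBasis ι 𝕜 E) (a : lp (fun _ : ι ↦ 𝕜) ∞) (i : ι) :
    diagonalOperator b a (b i) = a i • b i := by
  classical
  have hmul : lp.holderL 2 (fun _ ↦ ContinuousLinearMap.mul 𝕜 𝕜) (K := 1) (by simp) a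
      (lp.single 2 i (1 : 𝕜)) = a i • lp.single 2 i (1 : 𝕜) := by
    ext j
    obtain rfl | hj := eq_or_ne j i <;> simp [lp.holderL, *]
  simp [diagonalOperator, ContinuousLinearEquiv.arrowCongr, b.repr_self, hmul]

lemma diagonalOperator_single [DecidableEq ι] (b : HilbertBasis ι 𝕜 E) (i : ι) (c : 𝕜) :
    diagonalOperator b (lp.single ∞ i c) = c • rankOne 𝕜 (b i) (b i) := by
  refine clm_ext_of_hilbertBasis b fun j ↦ ?_
  obtain rfl | hij := eq_or_ne j i
  · simp [diagonalOperator_apply_basis, b.orthonormal.norm_eq_one]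
  · simp [diagonalOperator_apply_basis, hij, b.orthonormal.inner_eq_zero hij.symm]

lemma isCompactOperator_diagonalOperator [CompleteSpace E] (b : HilbertBasis ι 𝕜 E)
    {a : lp (fun _ : ι ↦ 𝕜) ∞} (ha : Tendsto a cofinite (𝓝 0)) :
    IsCompactOperator (diagonalOperator b a) := by
  classical
  have hsum : HasSum (fun i ↦ lp.single ∞ i (a i)) a :=
    hasSum_lp_infty_single_of_tendsto_norm (tendsto_zero_iff_norm_tendsto_zero.1 ha)
  refine isCompactOperator_of_tendsto ((diagonalOperator b).hasSum hsum)
    (Eventually.of_forall fun s ↦ ?_)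
  refine (compactOperator (RingHom.id 𝕜) E E).sum_mem fun i _ ↦ ?_
  rw [diagonalOperator_single]
  exact (isCompactOperator_rankOne (b i) (b i)).smul (a i)

/-- The isometry with `b i ↦ v i`, for a Hilbert basis `b` and an orthonormal family `v`. -/
noncomputable def orthonormalIsometry [CompleteSpace F] (b : HilbertBasis ι 𝕜 E) {v : ι → F}
    (hv : Orthonormal 𝕜 v) : E →ₗᵢ[𝕜] F :=
  hv.orthogonalFamily.linearIsometry.comp b.repr.toLinearIsometry

variable [CompleteSpace F] (b : HilbertBasis ι 𝕜 E) {v : ι → F} (hv : Orthonormal 𝕜 v)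

lemma orthonormalIsometry_apply_basis (i : ι) : orthonormalIsometry b hv (b i) = v i := by
  classical
  simp [orthonormalIsometry, b.repr_self]

variable [CompleteSpace E]

lemma adjoint_orthonormalIsometry_apply (i : ι) :
    adjoint (orthonormalIsometry b hv).toContinuousLinearMap (v i) = b i := by
  rw [← orthonormalIsometry_apply_basis b hv i]
  exact DFunLike.congr_fun (orthonormalIsometry b hv).adjoint_comp_self (b i)

lemma adjoint_orthonormalIsometry_apply_eq_zero {x : F} (hx : ∀ i, inner 𝕜 (v i) x = 0) :
    adjoint (orthonormalIsometry b hv).toContinuousLinearMap x = 0 := by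
  refine b.repr.injective (lp.ext (funext fun i ↦ ?_))
  rw [b.repr_apply_apply, ContinuousLinearMap.adjoint_inner_right]
  simpa [orthonormalIsometry_apply_basis] using hx i

end HilbertBasis

section Ampliation

variable {𝕜 E : Type*} [RCLike 𝕜] [NormedAddCommGroup E] [InnerProductSpace 𝕜 E] [CompleteSpace E]

lemma exists_mem_span_apply_basis_eq_div_smul (b : HilbertBasis ℕ 𝕜 E) {T : E →L[𝕜] E} {c : ℕ → 𝕜}
    (hT : ∀ n, T (b n) = c n • b n) {m : ℕ} (hm : m ≠ 0) :
    ∃ D ∈ TwoSidedIdeal.span {T}, ∀ n, D (b n) = c (n / m) • b n := by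
  have hv (r : ℕ) : Orthonormal 𝕜 fun k ↦ b (m * k + r) :=
    b.orthonormal.comp _ fun k l h ↦ by simpa [hm] using h
  let V (r : ℕ) : E →L[𝕜] E := (orthonormalIsometry b (hv r)).toContinuousLinearMap
  refine ⟨∑ r ∈ Finset.range m, V r * T * adjoint (V r), ?_, fun n ↦ ?_⟩
  · exact TwoSidedIdeal.finsetSum_mem _ _ _ fun r _ ↦ TwoSidedIdeal.mul_mem_right _ _ _
      (TwoSidedIdeal.mul_mem_left _ _ _ (TwoSidedIdeal.subset_span rfl))
  have hself : (V (n % m) * T * adjoint (V (n % m))) (b n) = c (n / m) • b n := by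
    have hV := orthonormalIsometry_apply_basis b (hv (n % m)) (n / m)
    have hV' := adjoint_orthonormalIsometry_apply b (hv (n % m)) (n / m)
    simp only [Nat.div_add_mod] at hV hV'
    simp [V, hV, hV', hT]
  have hother (r : ℕ) (hr : r < m) (hrn : r ≠ n % m) : (V r * T * adjoint (V r)) (b n) = 0 := by
    have hV' : adjoint (V r) (b n) = 0 := by
      refine adjoint_orthonormalIsometry_apply_eq_zero b (hv r) fun k ↦ b.orthonormal.2 ?_
      rintro rfl
      exact hrn (by simp [Nat.mod_eq_of_lt hr])
    simp [hV']
  rw [sum_apply, Finset.sum_eq_single_of_mem (n % m)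
    (Finset.mem_range.2 (n.mod_lt (Nat.pos_of_ne_zero hm)))
    fun r hr ↦ hother r (Finset.mem_range.1 hr), hself]

theorem exists_eq_mem_span_mul_isCompactOperator (b : HilbertBasis ℕ 𝕜 E) {T : E →L[𝕜] E}
    {c a : ℕ → 𝕜} (hT : ∀ n, T (b n) = c n • b n) {m : ℕ} (hm : m ≠ 0)
    (hc : ∀ n, c n = c (n / m) * a n) (ha : Tendsto a atTop (𝓝 0)) :
    ∃ D ∈ TwoSidedIdeal.span {T}, ∃ A : E →L[𝕜] E, IsCompactOperator A ∧ T = D * A := by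
  obtain ⟨D, hD, hDb⟩ := exists_mem_span_apply_basis_eq_div_smul b hT hm
  rw [← Nat.cofinite_eq_atTop] at ha
  let a' : lp (fun _ : ℕ ↦ 𝕜) ∞ := ⟨a, memℓp_infty ha.norm.bddAbove_range_of_cofinite⟩
  refine ⟨D, hD, diagonalOperator b a', isCompactOperator_diagonalOperator b ha,
    clm_ext_of_hilbertBasis b fun n ↦ ?_⟩
  calc T (b n) = (c (n / m) * a n) • b n := by rw [hT, ← hc]
    _ = D (a n • b n) := by rw [map_smul, hDb, smul_smul, mul_comm]
    _ = (D * diagonalOperator b a') (b n) := by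
      rw [mul_apply_eq_comp, diagonalOperator_apply_basis]

end Ampliation

lemma coe_default_hilbertBasis : ⇑(default : HilbertBasis ℕ ℂ ellTwo) = stdBasis :=
  funext fun n ↦ (default : HilbertBasis ℕ ℂ ellTwo).repr_symm_single n |>.symm

lemma tendsto_inv_two_pow_sub_half :
    Tendsto (fun n : ℕ ↦ ((2 : ℂ) ^ (n - n / 2))⁻¹) atTop (𝓝 0) := by
  have hexp : Tendsto (fun n : ℕ ↦ n - n / 2) atTop atTop :=
    tendsto_atTop_mono (fun n ↦ by lia) (Nat.tendsto_div_const_atTop two_ne_zero)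
  have hpow : Tendsto (fun n : ℕ ↦ (2 : ℂ)⁻¹ ^ n) atTop (𝓝 0) :=
    tendsto_pow_atTop_nhds_zero_of_norm_lt_one (by norm_num)
  simpa only [inv_pow, Function.comp_def] using hpow.comp hexp

-- `hc` and `ha` are a pointwise form of `c = o(D_m c)`, where `(D_m c) n = c (n / m)` is the
-- `m`-fold ampliation of `c`.
theorem stmt7_general {c a : ℕ → ℂ} {m : ℕ} (hm : m ≠ 0) (hc : ∀ n, c n = c (n / m) * a n)
    (ha : Tendsto a atTop (𝓝 0)) (T : ellTwo →L[ℂ] ellTwo)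
    (hT : ∀ n, T (stdBasis n) = c n • stdBasis n) :
    TwoSidedIdeal.span {T} = idealMul (TwoSidedIdeal.span {T}) compactIdeal := by
  rw [← coe_default_hilbertBasis] at hT
  obtain ⟨D, hD, A, hA, rfl⟩ := exists_eq_mem_span_mul_isCompactOperator default hT hm hc ha
  exact span_singleton_eq_idealMul hD ((TwoSidedIdeal.mem_mk' ..).2 hA)

/-- The principal two-sided ideal generated by the diagonal operator
`T e_n = 2^{-n} e_n` on `ℓ²(ℕ, ℂ)` is soft-edged: `(T) = (T)·K(ℓ²)`. -/
theorem stmt7 (T : ellTwo →L[ℂ] ellTwo)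
    (hT : ∀ n : ℕ, T (stdBasis n) = ((2 : ℂ) ^ n)⁻¹ • stdBasis n) :
    TwoSidedIdeal.span {T} = idealMul (TwoSidedIdeal.span {T}) compactIdeal := by
  refine stmt7_general two_ne_zero (fun n ↦ ?_) tendsto_inv_two_pow_sub_half T hT
  rw [← mul_inv, ← pow_add, Nat.add_sub_cancel' (n.div_le_self 2)]
end
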